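/- arXiv:1410.7449 — 2 statements merged into one kernel-verified Lean document; each statement's English description precedes it below -/
import Mathlib

section
/- For every natural number N there exists a constant C(N), depending only on N, with the following property. Let F_q be a finite field with q elements, let d ≥ 1, let f ∈ F_q[t][x₁,…,x_d] be square-free with total degree in (x₁,…,x_d) at most N and deg_t f ≤ N, and let m₁,…,m_d be integers with 2 ≤ m_i ≤ N for all i. Then the number of d-tuples (u₁,…,u_d), where each u_i ∈ F_q[t] is monic of degree m_i, such that f(t, u₁(t),…, u_d(t)) is not square-free in F_q[t], is at most C(N)·q^{(m₁+⋯+m_d) − 1}. In particular, if q > C(N) then there exist monic polynomials u_i of degree m_i (i = 1,…,d) such that f(t, u₁(t),…, u_d(t)) is square-free. -/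
/-!
Tuples of monic polynomials of degrees at least `2` are stable under adding linear polynomials
`aᵢ + bᵢ t`, so it suffices to bound, for a fixed tuple `v`, the proportion of `(a, b)` for which
`f` takes a non-squarefree value at `v + a + b t`, and to average over the translates.

With `a` and `b` generic this value is a polynomial in `t` over `F[a, b]`. At a specialization where
its resultant with its `t`-derivative does not vanish, the value is squarefree; by Schwartz–Zippel
few specializations are bad, provided the resultant is not identically zero. To see that,
take `xᵢ = vᵢ + aᵢ + bᵢ t` as a coordinate in place of `aᵢ`, so that `F[a, b][t]` becomes
`F[t, x][b]`. The generic value becomes `f`, which is constant in `b`, and its `t`-derivative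
becomes `∂f/∂t + ∑ (bᵢ + vᵢ') ∂f/∂xᵢ`. A common factor therefore divides `f` and all its partial
derivatives, which is impossible for squarefree `f` over a perfect field.
-/

namespace SquarefreeValues

open MvPolynomial
open Finset (univ)
open Polynomial (derivative)
open scoped Finset NNRat Polynomial

section Derivatives

variable {σ R : Type*}

lemma totalDegree_pderiv_lt [CommSemiring R] {p : MvPolynomial σ R} {i : σ}
    (h : pderiv i p ≠ 0) : (pderiv i p).totalDegree < p.totalDegree := by
  classical
  have hlt : ∀ s ∈ (pderiv i p).support, (s.sum fun _ e => e) < p.totalDegree := by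
    intro s hs
    have hmem : s + Finsupp.single i 1 ∈ p.support := by
      rw [mem_support_iff, coeff_pderiv] at hs
      exact mem_support_iff.2 (left_ne_zero_of_mul hs)
    have hle := le_totalDegree hmem
    rw [Finsupp.sum_add_index' (fun _ => rfl) fun _ _ _ => rfl,
      Finsupp.sum_single_index rfl] at hle
    exact hle
  obtain ⟨s, hs⟩ := support_nonempty.2 h
  exact (Finset.sup_lt_iff (bot_le.trans_lt (hlt s hs))).2 hlt

lemma pderiv_eq_zero_of_dvd [CommRing R] [IsDomain R] {p : MvPolynomial σ R} {i : σ}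
    (h : p ∣ pderiv i p) : pderiv i p = 0 := by
  by_contra hne
  exact (totalDegree_pderiv_lt hne).not_ge (totalDegree_le_of_dvd_of_isDomain h hne)

lemma natCast_exponent_eq_zero_of_pderiv_eq_zero [CommSemiring R] [NoZeroDivisors R]
    {p : MvPolynomial σ R} {i : σ} (h : pderiv i p = 0) {s : σ →₀ ℕ} (hs : s ∈ p.support) :
    ((s i : ℕ) : R) = 0 := by
  obtain hsi | hsi := Nat.eq_zero_or_pos (s i)
  · rw [hsi, Nat.cast_zero]
  have hle : Finsupp.single i 1 ≤ s := Finsupp.single_le_iff.2 hsi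
  have hcoeff := coeff_pderiv p (s - Finsupp.single i 1) (i := i)
  rw [h, coeff_zero, tsub_add_cancel_of_le hle] at hcoeff
  have hcast := (mul_eq_zero.1 hcoeff.symm).resolve_left (mem_support_iff.1 hs)
  rwa [Finsupp.tsub_apply, Finsupp.single_eq_same, ← Nat.cast_add_one,
    Nat.sub_add_cancel hsi] at hcast

lemma exists_eq_pow_of_forall_pderiv_eq_zero [CommRing R] [IsDomain R] (p : ℕ) [Fact p.Prime]
    [CharP R p] [PerfectRing R p] {f : MvPolynomial σ R} (h : ∀ i, pderiv i f = 0) :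
    ∃ g, f = g ^ p := by
  have hdvd : ∀ s ∈ f.support, ∀ i, p ∣ s i := fun s hs i =>
    (CharP.cast_eq_zero_iff R p _).1 (natCast_exponent_eq_zero_of_pderiv_eq_zero (h i) hs)
  choose r hr using surjective_frobenius R p
  refine ⟨∑ s ∈ f.support, monomial (s.mapRange (· / p) (Nat.zero_div p)) (r (coeff s f)), ?_⟩
  rw [sum_pow_char]
  conv_lhs => rw [f.as_sum]
  refine Finset.sum_congr rfl fun s hs => ?_
  have hroot : r (coeff s f) ^ p = coeff s f := hr _
  have hexp : p • s.mapRange (· / p) (Nat.zero_div p) = s := by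
    ext i
    exact Nat.mul_div_cancel' (hdvd s hs i)
  rw [monomial_pow, hroot, hexp]

lemma exists_pderiv_ne_zero_of_irreducible {F : Type*} [Field F] [PerfectField F]
    {f : MvPolynomial σ F} (hf : Irreducible f) : ∃ i, pderiv i f ≠ 0 := by
  by_contra! h
  obtain ⟨p, hchar⟩ := ExpChar.exists F
  cases hchar with
  | zero =>
    have hdeg : f.totalDegree = 0 := (totalDegree_eq_zero_iff σ f).2 fun s hs i => by
      exact_mod_cast natCast_exponent_eq_zero_of_pderiv_eq_zero (h i) hs
    obtain ⟨c, rfl⟩ : ∃ c, f = C c := ⟨_, totalDegree_eq_zero_iff_eq_C.1 hdeg⟩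
    have hc : c ≠ 0 := fun hc => hf.ne_zero (by rw [hc, C_0])
    exact hf.not_isUnit ((isUnit_iff_ne_zero.2 hc).map C)
  | prime hp =>
    have := Fact.mk hp
    obtain ⟨g, rfl⟩ := exists_eq_pow_of_forall_pderiv_eq_zero p h
    exact not_irreducible_pow hp.one_lt.ne' hf

lemma isUnit_of_dvd_of_forall_dvd_pderiv {F : Type*} [Field F] [PerfectField F]
    {f p : MvPolynomial σ F} (hf : Squarefree f) (hpf : p ∣ f) (hp : ∀ i, p ∣ pderiv i f) :
    IsUnit p := by
  by_contra hu
  obtain ⟨r, hr, hrp⟩ :=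
    WfDvdMonoid.exists_irreducible_factor hu (ne_zero_of_dvd_ne_zero hf.ne_zero hpf)
  obtain ⟨i, hi⟩ := exists_pderiv_ne_zero_of_irreducible hr
  obtain ⟨g, rfl⟩ := hrp.trans hpf
  have hdvd : r ∣ pderiv i r * g := by
    have := hrp.trans (hp i)
    rw [pderiv_mul] at this
    exact (dvd_add_left (dvd_mul_right _ _)).1 this
  obtain hri | hrg := hr.prime.dvd_or_dvd hdvd
  · exact hi (pderiv_eq_zero_of_dvd hri)
  · exact hr.not_isUnit (hf r (mul_dvd_mul_left r hrg))

end Derivatives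

lemma derivative_aeval {ι R S : Type*} [Fintype ι] [CommSemiring R] [CommSemiring S] [Algebra R S]
    (w : ι → S[X]) (f : MvPolynomial ι R) :
    derivative (aeval w f) = ∑ i, aeval w (pderiv i f) * derivative (w i) := by
  classical
  induction f using MvPolynomial.induction_on with
  | C a => simp [Polynomial.algebraMap_apply]
  | add p q hp hq => simp only [map_add, hp, hq, add_mul, Finset.sum_add_distrib]
  | mul_X p j hp =>
    simp only [map_mul, aeval_X, Polynomial.derivative_mul, hp, pderiv_mul, pderiv_X, map_add,
      add_mul, Finset.sum_add_distrib, Finset.sum_mul]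
    congr 1
    · exact Finset.sum_congr rfl fun i _ => mul_right_comm _ _ _
    · rw [Finset.sum_eq_single j (fun i _ hij => by simp [hij.symm]) (by simp)]
      simp

lemma isRelPrime_C_affine {σ A : Type*} [Fintype σ] [CommRing A] [IsDomain A] {f a : A}
    {b : σ → A} (hf : f ≠ 0) (h : ∀ q, q ∣ f → q ∣ a → (∀ i, q ∣ b i) → IsUnit q) (y : σ → A) :
    IsRelPrime (C f) (C a + ∑ i, C (b i) * (X i + C (y i))) := by
  classical
  intro p hpf hp
  obtain ⟨q, hqf, rfl⟩ := (dvd_C_iff_exists hf).1 hpf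
  have hb : ∀ i, q ∣ b i := fun i => by
    have hne : (0 : σ →₀ ℕ) ≠ Finsupp.single i 1 := (Finsupp.single_ne_zero.2 one_ne_zero).symm
    simpa [coeff_X, coeff_C_mul, Finsupp.single_left_inj, coeff_C, coeff_sum, mul_add, hne] using
      (C_dvd_iff_dvd_coeff _ _).1 hp (Finsupp.single i 1)
  have ha : C q ∣ C a :=
    (dvd_add_left (Finset.dvd_sum fun i _ => (map_dvd C (hb i)).mul_right _)).1 hp
  have ha' : q ∣ a := by simpa using (C_dvd_iff_dvd_coeff _ _).1 ha 0
  exact (h q hqf ha' hb).map C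

lemma squarefree_of_squarefree_map {M N G : Type*} [Monoid M] [Monoid N] [FunLike G M N]
    [MonoidHomClass G M N] (φ : G) [IsLocalHom φ] {a : M} (h : Squarefree (φ a)) :
    Squarefree a := fun x hx =>
  .of_map φ x (h (φ x) (by rw [← map_mul]; exact map_dvd φ hx))

section Generic

variable {σ R : Type*} [CommRing R]

/-- The linear polynomials `aᵢ + bᵢ t`, where `c` lists the `aᵢ` on the left summand of `σ ⊕ σ`
and the `bᵢ` on the right one. -/
noncomputable def linearTuple (c : σ ⊕ σ → R) (i : σ) : R[X] :=
  Polynomial.C (c (.inr i)) * Polynomial.X + Polynomial.C (c (.inl i))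

/-- The translate `vᵢ + aᵢ + bᵢ t` of `v` by a linear tuple with indeterminate coefficients. -/
noncomputable def genericTuple (v : σ → R[X]) (i : σ) : (MvPolynomial (σ ⊕ σ) R)[X] :=
  (v i).map C + linearTuple X i

/-- The value of `f` at the generic linear translate of `v`. -/
noncomputable def genericValue (v : σ → R[X]) (f : MvPolynomial σ R[X]) :
    (MvPolynomial (σ ⊕ σ) R)[X] :=
  eval₂ (Polynomial.mapRingHom C) (genericTuple v) f

lemma map_genericValue (v : σ → R[X]) (f : MvPolynomial σ R[X]) (c : σ ⊕ σ → R) :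
    (genericValue v f).map (eval c) = eval (v + linearTuple c) f := by
  have hC : (eval c).comp C = RingHom.id R := RingHom.ext fun _ => eval_C _
  rw [genericValue, ← Polynomial.coe_mapRingHom, ← coe_eval₂Hom, ← RingHom.comp_apply]
  congr 1
  ext i <;> simp [genericTuple, linearTuple, Polynomial.map_map, hC]

/-- The point `(t, v + a + b t)`, for polynomials in which `t` is the variable `none`. -/
noncomputable def genericCoord (v : σ → R[X]) (o : Option σ) : (MvPolynomial (σ ⊕ σ) R)[X] :=
  o.elim Polynomial.X (genericTuple v)

lemma genericValue_optionEquivRight (v : σ → R[X]) (f : MvPolynomial (Option σ) R) :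
    genericValue v (optionEquivRight R σ f) = aeval (genericCoord v) f := by
  have hcomp : (eval₂Hom (Polynomial.mapRingHom C) (genericTuple v)).comp
      (optionEquivRight R σ : MvPolynomial (Option σ) R →+* MvPolynomial σ R[X]) =
      (aeval (genericCoord v) : _ →ₐ[R] (MvPolynomial (σ ⊕ σ) R)[X]) := by
    ext o : 2
    · simp [Polynomial.algebraMap_apply]
    · cases o <;> simp [genericCoord]
  exact RingHom.congr_fun hcomp f

/-- The change of coordinates `F[a, b][t] → F[t, x][b]` given by `aᵢ ↦ xᵢ - vᵢ - bᵢ t`, which turns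
`genericTuple v` into the tuple `x`; here `t` and `xᵢ` are the variables `none` and `some i`. -/
noncomputable def absorbConstants (v : σ → R[X]) :
    (MvPolynomial (σ ⊕ σ) R)[X] →ₐ[R] MvPolynomial σ (MvPolynomial (Option σ) R) :=
  Polynomial.aevalTower
    (aeval (Sum.elim
      (fun i => C (X (some i) - Polynomial.aeval (X none) (v i)) - X i * C (X none)) X))
    (C (X none))

lemma absorbConstants_X (v : σ → R[X]) : absorbConstants v Polynomial.X = C (X none) :=
  Polynomial.aevalTower_X _ _

lemma absorbConstants_C_X_inl (v : σ → R[X]) (i : σ) :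
    absorbConstants v (Polynomial.C (X (.inl i))) =
      C (X (some i) - Polynomial.aeval (X none) (v i)) - X i * C (X none) := by
  rw [absorbConstants, Polynomial.aevalTower_C, aeval_X, Sum.elim_inl]

lemma absorbConstants_C_X_inr (v : σ → R[X]) (i : σ) :
    absorbConstants v (Polynomial.C (X (.inr i))) = X i := by
  rw [absorbConstants, Polynomial.aevalTower_C, aeval_X, Sum.elim_inr]

lemma absorbConstants_map_C (v : σ → R[X]) (p : R[X]) :
    absorbConstants v (p.map C) = C (Polynomial.aeval (X none) p) := by
  rw [← MvPolynomial.algebraMap_eq, ← Polynomial.aeval_X_left_eq_map,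
    ← Polynomial.aeval_algHom_apply, absorbConstants_X]
  exact Polynomial.aeval_algebraMap_apply _ _ _

lemma absorbConstants_aeval_genericCoord (v : σ → R[X]) (f : MvPolynomial (Option σ) R) :
    absorbConstants v (aeval (genericCoord v) f) = C f := by
  rw [← AlgHom.comp_apply]
  refine AlgHom.congr_fun (φ₂ := IsScalarTower.toAlgHom R _ _) ?_ f
  ext (_ | i) : 1
  · simp [genericCoord, absorbConstants_X]
  · simp [genericCoord, genericTuple, linearTuple, absorbConstants_map_C, absorbConstants_C_X_inl,
      absorbConstants_C_X_inr, absorbConstants_X]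

lemma absorbConstants_derivative_genericTuple (v : σ → R[X]) (i : σ) :
    absorbConstants v (derivative (genericTuple v i)) =
      X i + C (Polynomial.aeval (X none) (derivative (v i))) := by
  simp [genericTuple, linearTuple, Polynomial.derivative_map, absorbConstants_map_C,
    absorbConstants_C_X_inr, add_comm]

lemma absorbConstants_leftInverse (v : σ → R[X]) :
    Function.LeftInverse
      (aevalTower (aeval (genericCoord v)) fun i => Polynomial.C (X (.inr i)))
      (absorbConstants v) := by
  intro p
  rw [← AlgHom.comp_apply]
  refine AlgHom.congr_fun (φ₂ := AlgHom.id R _) ?_ p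
  ext i : 2
  · rcases i with i | i
    · have hv : aeval (R := R) (genericCoord v) (Polynomial.aeval (X none) (v i)) =
          (v i).map C := by
        rw [← Polynomial.aeval_algHom_apply, aeval_X, genericCoord, Option.elim_none,
          Polynomial.aeval_X_left_eq_map, MvPolynomial.algebraMap_eq]
      simp [absorbConstants_C_X_inl, hv, genericCoord, genericTuple, linearTuple]
    · simp [absorbConstants_C_X_inr]
  · simp [absorbConstants_X, genericCoord]

lemma isRelPrime_genericValue_derivative {σ F : Type*} [Finite σ] [Field F] [PerfectField F]
    {f : MvPolynomial σ F[X]} (hf : Squarefree f) (v : σ → F[X]) :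
    IsRelPrime (genericValue v f) (derivative (genericValue v f)) := by
  have := Fintype.ofFinite σ
  obtain ⟨g, rfl⟩ := (optionEquivRight F σ).surjective f
  have hg : Squarefree g := squarefree_of_squarefree_map (optionEquivRight F σ) hf
  have : IsLocalHom (absorbConstants v) :=
    isLocalHom_of_leftInverse _ (absorbConstants_leftInverse v)
  refine .of_map (absorbConstants v) ?_
  rw [genericValue_optionEquivRight, derivative_aeval, map_sum, Fintype.sum_option]
  simp only [map_mul, absorbConstants_aeval_genericCoord, genericCoord, Option.elim_none,
    Polynomial.derivative_X, mul_one, Option.elim_some,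
    absorbConstants_derivative_genericTuple]
  exact isRelPrime_C_affine hg.ne_zero (fun q hq h₀ h =>
    isUnit_of_dvd_of_forall_dvd_pderiv hg hq fun o => o.casesOn h₀ h) _

end Generic

section Resultant

variable {R : Type*} [CommRing R]

lemma det_toMatrix_ne_zero_of_injective [IsDomain R] {M N ι : Type*} [AddCommGroup M] [Module R M]
    [AddCommGroup N] [Module R N] [Fintype ι] [DecidableEq ι] (b : Module.Basis ι R M)
    (b' : Module.Basis ι R N) {L : M →ₗ[R] N} (hL : Function.Injective L) :
    (LinearMap.toMatrix b b' L).det ≠ 0 := by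
  intro hdet
  obtain ⟨v, hv, hLv⟩ := Matrix.exists_mulVec_eq_zero_iff.2 hdet
  have hrepr := LinearMap.toMatrix_mulVec_repr b b' L (b.equivFun.symm v)
  have hv' : ⇑(b.repr (b.equivFun.symm v)) = v := b.equivFun.apply_symm_apply v
  rw [hv', hLv] at hrepr
  have : L (b.equivFun.symm v) = 0 := b'.repr.map_eq_zero_iff.1 (DFunLike.coe_injective hrepr.symm)
  exact hv (b.equivFun.symm.map_eq_zero_iff.1 ((map_eq_zero_iff L hL).1 this))

lemma sylvesterMap_injective [IsDomain R] [DecompositionMonoid R[X]] {g h : R[X]} (hg : g ≠ 0)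
    (hrel : IsRelPrime g h) :
    Function.Injective (Polynomial.sylvesterMap g h le_rfl le_rfl) := by
  refine (injective_iff_map_eq_zero _).2 ?_
  rintro ⟨⟨p, hp⟩, ⟨q, hq⟩⟩ hpq
  have hsum : g * q + h * p = 0 := by simpa using congrArg Subtype.val hpq
  have hgp : g ∣ p := hrel.dvd_of_dvd_mul_left ⟨-q, by linear_combination hsum⟩
  have hp0 : p = 0 := by
    refine Polynomial.eq_zero_of_dvd_of_degree_lt hgp ?_
    rw [Polynomial.degree_eq_natDegree hg]
    exact Polynomial.mem_degreeLT.1 hp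
  have hq0 : q = 0 := by simpa [hp0, hg] using hsum
  simp [hp0, hq0]

lemma resultant_ne_zero_of_isRelPrime [IsDomain R] [DecompositionMonoid R[X]] {g h : R[X]}
    (hg : g ≠ 0) (hrel : IsRelPrime g h) : g.resultant h ≠ 0 := by
  rw [Polynomial.resultant, ← Polynomial.toMatrix_sylvesterMap' g h le_rfl le_rfl]
  exact det_toMatrix_ne_zero_of_injective _ _ (sylvesterMap_injective hg hrel)

lemma squarefree_map_of_resultant_ne_zero {K : Type*} [Field K] (φ : R →+* K) {g : R[X]}
    (hrel : IsRelPrime g (derivative g)) (hres : φ (g.resultant (derivative g)) ≠ 0) :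
    Squarefree (g.map φ) := by
  obtain hdeg | hdeg := eq_or_ne g.natDegree 0
  · rw [Polynomial.derivative_of_natDegree_zero hdeg, isRelPrime_zero_right] at hrel
    exact (hrel.map (Polynomial.mapRingHom φ)).squarefree
  obtain ⟨p, q, -, -, h⟩ := Polynomial.exists_mul_add_mul_eq_C_resultant g (derivative g) le_rfl
    le_rfl (.inl hdeg)
  have hmap := congrArg (Polynomial.map φ) h
  simp only [Polynomial.map_add, Polynomial.map_mul, Polynomial.map_C,
    ← Polynomial.derivative_map] at hmap
  have hrel' : IsRelPrime (g.map φ) (derivative (g.map φ)) := fun d hd hd' =>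
    isUnit_of_dvd_unit (hmap ▸ dvd_add (hd.mul_right _) (hd'.mul_right _))
      (Polynomial.isUnit_C.2 hres.isUnit)
  exact Polynomial.Separable.squarefree hrel'.isCoprime

lemma totalDegree_det_le {σ ι : Type*} [Fintype ι] [DecidableEq ι] {k : ℕ}
    {M : Matrix ι ι (MvPolynomial σ R)} (hM : ∀ i j, (M i j).totalDegree ≤ k) :
    M.det.totalDegree ≤ Fintype.card ι * k := by
  rw [Matrix.det_apply']
  refine totalDegree_finsetSum_le fun s _ => ?_
  have hprod : (∏ i, M (s i) i).totalDegree ≤ Fintype.card ι * k :=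
    (totalDegree_finsetProd _ _).trans
      ((Finset.sum_le_card_nsmul _ _ _ fun i _ => hM _ _).trans_eq (by simp))
  obtain h | h := Int.units_eq_one_or (Equiv.Perm.sign s) <;> simpa [h] using hprod

end Resultant

section CoeffDegree

variable {σ R : Type*} [CommSemiring R]

/-- The largest total degree of a coefficient of `p`, with value `0` at `p = 0`. -/
noncomputable def coeffDegree (p : (MvPolynomial σ R)[X]) : ℕ :=
  p.support.sup fun n => (p.coeff n).totalDegree

lemma coeffDegree_le_iff {p : (MvPolynomial σ R)[X]} {k : ℕ} :
    coeffDegree p ≤ k ↔ ∀ n, (p.coeff n).totalDegree ≤ k := by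
  refine Finset.sup_le_iff.trans ⟨fun h n => ?_, fun h n _ => h n⟩
  by_cases hn : n ∈ p.support
  · exact h n hn
  · simp [Polynomial.notMem_support_iff.1 hn]

lemma totalDegree_coeff_le_coeffDegree (p : (MvPolynomial σ R)[X]) (n : ℕ) :
    (p.coeff n).totalDegree ≤ coeffDegree p :=
  coeffDegree_le_iff.1 le_rfl n

lemma coeffDegree_add_le (p q : (MvPolynomial σ R)[X]) :
    coeffDegree (p + q) ≤ max (coeffDegree p) (coeffDegree q) :=
  coeffDegree_le_iff.2 fun n => by
    rw [Polynomial.coeff_add]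
    exact (totalDegree_add _ _).trans
      (max_le_max (totalDegree_coeff_le_coeffDegree p n) (totalDegree_coeff_le_coeffDegree q n))

lemma coeffDegree_mul_le (p q : (MvPolynomial σ R)[X]) :
    coeffDegree (p * q) ≤ coeffDegree p + coeffDegree q :=
  coeffDegree_le_iff.2 fun n => by
    rw [Polynomial.coeff_mul]
    exact totalDegree_finsetSum_le fun x _ => (totalDegree_mul _ _).trans
      (add_le_add (totalDegree_coeff_le_coeffDegree p _) (totalDegree_coeff_le_coeffDegree q _))

lemma coeffDegree_map_C (p : R[X]) : coeffDegree (p.map (C : R →+* MvPolynomial σ R)) = 0 :=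
  Nat.le_zero.1 (coeffDegree_le_iff.2 fun n => by simp)

lemma coeffDegree_X : coeffDegree (Polynomial.X : (MvPolynomial σ R)[X]) = 0 := by
  rw [← Polynomial.map_X (C : R →+* MvPolynomial σ R), coeffDegree_map_C]

lemma coeffDegree_C_le (r : MvPolynomial σ R) : coeffDegree (Polynomial.C r) ≤ r.totalDegree :=
  coeffDegree_le_iff.2 fun n => by
    rw [Polynomial.coeff_C]
    split_ifs <;> simp

lemma coeffDegree_derivative_le (p : (MvPolynomial σ R)[X]) :
    coeffDegree (derivative p) ≤ coeffDegree p :=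
  coeffDegree_le_iff.2 fun n => by
    rw [Polynomial.coeff_derivative, ← Nat.cast_add_one, ← map_natCast (C : R →+* _), mul_comm]
    refine (totalDegree_mul _ _).trans ?_
    rw [totalDegree_C, zero_add]
    exact totalDegree_coeff_le_coeffDegree p _

lemma totalDegree_resultant_le {R : Type*} [CommRing R] (g h : (MvPolynomial σ R)[X]) (m n : ℕ) :
    (g.resultant h m n).totalDegree ≤ (m + n) * max (coeffDegree g) (coeffDegree h) := by
  rw [Polynomial.resultant]
  refine (totalDegree_det_le fun i j => ?_).trans_eq (by rw [Fintype.card_fin])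
  simp only [Polynomial.sylvester, Matrix.of_apply]
  induction j using Fin.addCases with
  | left j => simp only [Fin.addCases_left]; split_ifs <;> simp [totalDegree_coeff_le_coeffDegree]
  | right j => simp only [Fin.addCases_right]; split_ifs <;> simp [totalDegree_coeff_le_coeffDegree]

end CoeffDegree

lemma apply_eval₂_le {σ S T : Type*} [CommSemiring S] [CommSemiring T] (δ : T → ℕ)
    (h_zero : δ 0 = 0) (h_one : δ 1 = 0) (h_add : ∀ x y, δ (x + y) ≤ max (δ x) (δ y))
    (h_mul : ∀ x y, δ (x * y) ≤ δ x + δ y) {φ : S →+* T} {w : σ → T} {f : MvPolynomial σ S}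
    {a b : ℕ} (ha : ∀ s, δ (φ (f.coeff s)) ≤ a) (hb : ∀ i, δ (w i) ≤ b) :
    δ (eval₂ φ w f) ≤ a + f.totalDegree * b := by
  rw [eval₂_eq]
  have hpow : ∀ i n, δ (w i ^ n) ≤ n * b := by
    intro i n
    induction n with
    | zero => simp [h_one]
    | succ n ih =>
      rw [pow_succ, add_mul, one_mul]
      exact (h_mul _ _).trans (add_le_add ih (hb i))
  refine Finset.sum_induction _ (δ · ≤ a + f.totalDegree * b)
    (fun x y hx hy => (h_add x y).trans (max_le hx hy)) (h_zero.trans_le zero_le) fun s hs => ?_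
  refine (h_mul _ _).trans (add_le_add (ha s) ?_)
  calc δ (∏ i ∈ s.support, w i ^ s i) ≤ ∑ i ∈ s.support, δ (w i ^ s i) :=
        Finset.apply_prod_le_sum_apply _ _ h_one.le h_mul
    _ ≤ ∑ i ∈ s.support, s i * b := Finset.sum_le_sum fun i _ => hpow i _
    _ = (s.sum fun _ e => e) * b := (Finset.sum_mul ..).symm
    _ ≤ f.totalDegree * b := Nat.mul_le_mul_right b (le_totalDegree hs)

section Value

variable {σ R : Type*} [CommRing R]

/-- The resultant of the generic value and its derivative in `t`. -/
noncomputable def genericResultant (v : σ → R[X]) (f : MvPolynomial σ R[X]) :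
    MvPolynomial (σ ⊕ σ) R :=
  (genericValue v f).resultant (derivative (genericValue v f))

lemma genericResultant_ne_zero {F : Type*} [Finite σ] [Field F] [PerfectField F]
    {f : MvPolynomial σ F[X]} (hf : Squarefree f) (v : σ → F[X]) : genericResultant v f ≠ 0 := by
  have hrel := isRelPrime_genericValue_derivative hf v
  refine resultant_ne_zero_of_isRelPrime (fun h => ?_) hrel
  rw [h, map_zero, isRelPrime_zero_left] at hrel
  exact not_isUnit_zero hrel

lemma squarefree_eval_add_linearTuple {F : Type*} [Finite σ] [Field F] [PerfectField F]
    {f : MvPolynomial σ F[X]} (hf : Squarefree f) {v : σ → F[X]} {c : σ ⊕ σ → F}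
    (hc : eval c (genericResultant v f) ≠ 0) : Squarefree (eval (v + linearTuple c) f) := by
  rw [← map_genericValue]
  exact squarefree_map_of_resultant_ne_zero _ (isRelPrime_genericValue_derivative hf v) hc

lemma natDegree_genericValue_le {f : MvPolynomial σ R[X]} {v : σ → R[X]} {n M : ℕ}
    (hf : ∀ s, (f.coeff s).natDegree ≤ n) (hv : ∀ i, max (v i).natDegree 1 ≤ M) :
    (genericValue v f).natDegree ≤ n + f.totalDegree * M := by
  have hcoeff : ∀ s, (Polynomial.mapRingHom (C : R →+* MvPolynomial (σ ⊕ σ) R)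
      (f.coeff s)).natDegree ≤ n := fun s => Polynomial.natDegree_map_le.trans (hf s)
  have htuple : ∀ i, (genericTuple v i).natDegree ≤ M := fun i => by
    have hlin : (linearTuple X i : (MvPolynomial (σ ⊕ σ) R)[X]).natDegree ≤ 1 :=
      Polynomial.natDegree_linear_le
    rw [genericTuple]
    exact (Polynomial.natDegree_add_le _ _).trans
      ((max_le_max Polynomial.natDegree_map_le hlin).trans (hv i))
  refine apply_eval₂_le Polynomial.natDegree Polynomial.natDegree_zero Polynomial.natDegree_one
    ?_ ?_ hcoeff htuple
  · exact Polynomial.natDegree_add_le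
  · exact fun _ _ => Polynomial.natDegree_mul_le

lemma coeffDegree_genericTuple_le (v : σ → R[X]) (i : σ) : coeffDegree (genericTuple v i) ≤ 1 := by
  have hX : ∀ j : σ ⊕ σ, (X j : MvPolynomial (σ ⊕ σ) R).totalDegree ≤ 1 := fun j =>
    (totalDegree_monomial_le _ _).trans_eq (Finsupp.sum_single_index rfl)
  have hlin : coeffDegree (linearTuple (X : σ ⊕ σ → MvPolynomial (σ ⊕ σ) R) i) ≤ 1 := by
    refine (coeffDegree_add_le _ _).trans (max_le ((coeffDegree_mul_le _ _).trans ?_) ?_)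
    · rw [coeffDegree_X, add_zero]
      exact (coeffDegree_C_le _).trans (hX _)
    · exact (coeffDegree_C_le _).trans (hX _)
  exact (coeffDegree_add_le _ _).trans (max_le ((coeffDegree_map_C _).trans_le zero_le_one) hlin)

lemma coeffDegree_genericValue_le (v : σ → R[X]) (f : MvPolynomial σ R[X]) :
    coeffDegree (genericValue v f) ≤ f.totalDegree := by
  have hcoeff : ∀ s, coeffDegree (Polynomial.mapRingHom (C : R →+* MvPolynomial (σ ⊕ σ) R)
      (f.coeff s)) ≤ 0 := fun s => (coeffDegree_map_C (f.coeff s)).le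
  have hone : coeffDegree (1 : (MvPolynomial (σ ⊕ σ) R)[X]) = 0 := by
    rw [← Polynomial.map_one (C : R →+* _), coeffDegree_map_C]
  have hle := apply_eval₂_le coeffDegree (by rfl) hone coeffDegree_add_le coeffDegree_mul_le hcoeff
    (coeffDegree_genericTuple_le v)
  rwa [zero_add, mul_one] at hle

lemma totalDegree_genericResultant_le {f : MvPolynomial σ R[X]} {v : σ → R[X]} {n M : ℕ}
    (hf : ∀ s, (f.coeff s).natDegree ≤ n) (hv : ∀ i, max (v i).natDegree 1 ≤ M) :
    (genericResultant v f).totalDegree ≤ 2 * (n + f.totalDegree * M) * f.totalDegree := by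
  have hdeg := natDegree_genericValue_le hf hv
  have hcoeff := coeffDegree_genericValue_le v f
  refine (totalDegree_resultant_le _ _ _ _).trans (Nat.mul_le_mul ?_ ?_)
  · have := Polynomial.natDegree_derivative_le (genericValue v f)
    omega
  · exact max_le hcoeff ((coeffDegree_derivative_le _).trans hcoeff)

end Value

lemma card_filter_eval_eq_zero_le {σ R : Type*} [Fintype σ] [DecidableEq σ] [CommRing R]
    [IsDomain R] [Fintype R] [DecidableEq R] {p : MvPolynomial σ R} (hp : p ≠ 0) :
    (#{c : σ → R | eval c p = 0} : ℚ≥0) ≤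
      p.totalDegree / Fintype.card R * Fintype.card (σ → R) := by
  let e := Fintype.equivFin σ
  have hp' : rename e p ≠ 0 := by
    rwa [Ne, map_eq_zero_iff _ (rename_injective _ e.injective)]
  have hbound := schwartz_zippel_totalDegree hp' univ
  have hcard : #{c : σ → R | eval c p = 0} =
      #{c ∈ Fintype.piFinset fun _ => univ | eval c (rename e p) = 0} :=
    Finset.card_equiv (e.arrowCongr (.refl R)) fun c => by
      simp [eval_rename, Equiv.arrowCongr, Function.comp_assoc]
  rw [← hcard, Finset.card_univ] at hbound
  have hq : (0 : ℚ≥0) < Fintype.card R := by exact_mod_cast Fintype.card_pos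
  calc (#{c : σ → R | eval c p = 0} : ℚ≥0)
      ≤ (rename e p).totalDegree / Fintype.card R * Fintype.card R ^ Fintype.card σ :=
        (div_le_iff₀ (pow_pos hq _)).1 hbound
    _ ≤ p.totalDegree / Fintype.card R * Fintype.card (σ → R) := by
        rw [Fintype.card_fun, Nat.cast_pow]
        gcongr
        exact totalDegree_rename_le e p

lemma card_le_mul_card_of_forall_translate {V G : Type*} [Fintype V] [Nonempty V] [AddGroup G]
    [DecidableEq G] {s t : Finset G} {ε : ℚ≥0} (φ : V → G) (hts : ∀ c, ∀ u ∈ t, u - φ c ∈ s)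
    (hs : ∀ u ∈ s, (#{c | u + φ c ∈ t} : ℚ≥0) ≤ ε * Fintype.card V) :
    (#t : ℚ≥0) ≤ ε * #s := by
  have hinj : ∀ c, #t ≤ #{u ∈ s | u + φ c ∈ t} := fun c =>
    Finset.card_le_card_of_injOn (· - φ c)
      (fun u hu => Finset.mem_filter.2 ⟨hts c u hu, by rwa [sub_add_cancel]⟩)
      (sub_left_injective.injOn)
  have hcount : (Fintype.card V * #t : ℚ≥0) ≤ Fintype.card V * (ε * #s) := calc
    (Fintype.card V * #t : ℚ≥0) ≤ ((∑ c : V, #{u ∈ s | u + φ c ∈ t} : ℕ) : ℚ≥0) := by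
      exact_mod_cast Finset.card_nsmul_le_sum univ _ _ fun c _ => hinj c
    _ = ∑ u ∈ s, (#{c | u + φ c ∈ t} : ℚ≥0) := by
      exact_mod_cast Finset.sum_card_bipartiteAbove_eq_sum_card_bipartiteBelow (s := univ) (t := s)
        fun c u => u + φ c ∈ t
    _ ≤ #s • (ε * Fintype.card V) := Finset.sum_le_card_nsmul _ _ _ hs
    _ = Fintype.card V * (ε * #s) := by rw [nsmul_eq_mul]; ring
  exact le_of_mul_le_mul_left hcount (by exact_mod_cast Fintype.card_pos)

/-- The tuples of monic polynomials `uᵢ` of prescribed degrees `mᵢ`. -/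
def monicTuples {σ : Type*} (R : Type*) [CommRing R] (m : σ → ℕ) : Set (σ → R[X]) :=
  {u | ∀ i, (u i).Monic ∧ (u i).natDegree = m i}

/-- Monic polynomials of prescribed degrees are parametrized by their lower coefficients. -/
noncomputable def monicTuplesEquiv {σ : Type*} (R : Type*) [CommRing R] [Nontrivial R]
    (m : σ → ℕ) : monicTuples R m ≃ ((i : σ) × Fin (m i) → R) :=
  Equiv.subtypePiEquivPi.trans <| (Equiv.piCongrRight fun i =>
    (Polynomial.monicEquivDegreeLT (m i)).trans
      (Polynomial.degreeLTEquiv R (m i)).toEquiv).trans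
        (Equiv.piCurry fun _ _ => R).symm

section MonicTuples

variable {σ R : Type*} [CommRing R] {m : σ → ℕ}

lemma finite_monicTuples [Finite σ] [Finite R] [Nontrivial R] : (monicTuples R m).Finite :=
  have := Finite.of_equiv _ (monicTuplesEquiv R m).symm
  Set.toFinite _

lemma ncard_monicTuples [Fintype σ] [Fintype R] [Nontrivial R] :
    (monicTuples R m).ncard = Fintype.card R ^ ∑ i, m i := by
  classical
  rw [← Nat.card_coe_set_eq, Nat.card_congr (monicTuplesEquiv R m), Nat.card_eq_fintype_card]
  simp

lemma add_mem_monicTuples [Nontrivial R] {u r : σ → R[X]} (hu : u ∈ monicTuples R m)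
    (hr : ∀ i, (r i).degree < m i) : u + r ∈ monicTuples R m := fun i => by
  have hlt : (r i).degree < (u i).degree := by
    rw [Polynomial.degree_eq_natDegree (hu i).1.ne_zero, (hu i).2]
    exact hr i
  exact ⟨(hu i).1.add_of_left hlt,
    (Polynomial.natDegree_add_eq_left_of_degree_lt hlt).trans (hu i).2⟩

lemma degree_linearTuple_lt (hm : ∀ i, 2 ≤ m i) (c : σ ⊕ σ → R) (i : σ) :
    (linearTuple c i).degree < m i :=
  Polynomial.degree_linear_lt.trans_le (by exact_mod_cast hm i)

lemma sub_linearTuple_mem_monicTuples [Nontrivial R] (hm : ∀ i, 2 ≤ m i) {u : σ → R[X]}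
    (hu : u ∈ monicTuples R m) (c : σ ⊕ σ → R) :
    u - linearTuple c ∈ monicTuples R m := by
  rw [sub_eq_add_neg]
  exact add_mem_monicTuples hu fun i => by
    rw [Pi.neg_apply, Polynomial.degree_neg]
    exact degree_linearTuple_lt hm c i

end MonicTuples

lemma card_not_squarefree_eval_add_linearTuple_le {σ F : Type*} [Fintype σ] [DecidableEq σ]
    [Field F] [Fintype F] {f : MvPolynomial σ F[X]} (hf : Squarefree f) {v : σ → F[X]}
    {n M : ℕ} (hn : ∀ s, (f.coeff s).natDegree ≤ n)
    (hv : ∀ i, max (v i).natDegree 1 ≤ M)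
    [DecidablePred fun c : σ ⊕ σ → F => ¬ Squarefree (eval (v + linearTuple c) f)] :
    (#{c : σ ⊕ σ → F | ¬ Squarefree (eval (v + linearTuple c) f)} : ℚ≥0) ≤
      (2 * (n + f.totalDegree * M) * f.totalDegree : ℕ) / Fintype.card F *
        Fintype.card (σ ⊕ σ → F) := by
  classical
  have hzero : ∀ c : σ ⊕ σ → F, ¬ Squarefree (eval (v + linearTuple c) f) →
      eval c (genericResultant v f) = 0 :=
    fun c => not_imp_comm.1 (squarefree_eval_add_linearTuple hf)
  calc (#{c : σ ⊕ σ → F | ¬ Squarefree (eval (v + linearTuple c) f)} : ℚ≥0)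
      ≤ #{c : σ ⊕ σ → F | eval c (genericResultant v f) = 0} := by
        gcongr with c
        exact hzero c
    _ ≤ (genericResultant v f).totalDegree / Fintype.card F * Fintype.card (σ ⊕ σ → F) :=
        card_filter_eval_eq_zero_le (genericResultant_ne_zero hf v)
    _ ≤ _ := by
        gcongr
        exact totalDegree_genericResultant_le hn hv

lemma ncard_not_squarefree_mul_card_le {σ F : Type*} [Finite σ] [Field F] [Fintype F]
    {f : MvPolynomial σ F[X]} (hf : Squarefree f) {m : σ → ℕ} (hm : ∀ i, 2 ≤ m i) {n M : ℕ}
    (hn : ∀ s, (f.coeff s).natDegree ≤ n) (hM : ∀ i, m i ≤ M) :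
    {u ∈ monicTuples F m | ¬ Squarefree (eval u f)}.ncard * Fintype.card F ≤
      2 * (n + f.totalDegree * M) * f.totalDegree * (monicTuples F m).ncard := by
  classical
  have := Fintype.ofFinite σ
  have hfin := finite_monicTuples (R := F) (m := m)
  have hfin' := hfin.subset (Set.sep_subset _ fun u => ¬ Squarefree (eval u f))
  have htranslate (u) (hu : u ∈ hfin.toFinset) :
      (#{c | u + linearTuple c ∈ hfin'.toFinset} : ℚ≥0) ≤
        (2 * (n + f.totalDegree * M) * f.totalDegree : ℕ) / Fintype.card F *
          Fintype.card (σ ⊕ σ → F) := by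
    have hdeg : ∀ i, max (u i).natDegree 1 ≤ M := fun i => by
      have := hm i
      have := hM i
      rw [(hfin.mem_toFinset.1 hu i).2]
      omega
    refine le_trans ?_ (card_not_squarefree_eval_add_linearTuple_le hf hn hdeg)
    gcongr with c
    exact fun hc => (hfin'.mem_toFinset.1 hc).2
  have hle := card_le_mul_card_of_forall_translate linearTuple
    (fun c u hu => hfin.mem_toFinset.2
      (sub_linearTuple_mem_monicTuples hm (hfin'.mem_toFinset.1 hu).1 c)) htranslate
  have hq : (0 : ℚ≥0) < Fintype.card F := by exact_mod_cast Fintype.card_pos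
  rw [← Set.ncard_eq_toFinset_card _ hfin', ← Set.ncard_eq_toFinset_card _ hfin,
    div_mul_eq_mul_div, le_div_iff₀ hq] at hle
  exact_mod_cast hle

end SquarefreeValues

/-- For every `N` there is a constant `C N` such that for every finite field
`F_q`, every `d ≥ 1`, every square-free `f ∈ F_q[t][x₁,…,x_d]` with `deg_t f ≤ N` and total
degree in `x₁,…,x_d` at most `N`, and all `m₁,…,m_d` with `2 ≤ m_i ≤ N`, the number of
`d`-tuples of monic polynomials `u_i` of degree `m_i` such that `f(t, u₁(t),…,u_d(t))` is not
square-free is at most `C N · q^{m₁+⋯+m_d − 1}`; in particular if `q > C N` some such tuple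
makes the value square-free. -/
theorem squarefree_values_multivariate_monic (N : ℕ) :
    ∃ C : ℕ, ∀ (F : Type) [Field F] [Fintype F] (d : ℕ),
      1 ≤ d →
      ∀ (f : MvPolynomial (Fin d) (Polynomial F)) (m : Fin d → ℕ),
        Squarefree f →
        f.totalDegree ≤ N → (∀ s, (f.coeff s).natDegree ≤ N) →
        (∀ i, 2 ≤ m i) → (∀ i, m i ≤ N) →
        Set.ncard {u : Fin d → Polynomial F |
            (∀ i, (u i).Monic ∧ (u i).natDegree = m i) ∧
              ¬ Squarefree (MvPolynomial.eval u f)}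
            ≤ C * Fintype.card F ^ ((∑ i, m i) - 1) ∧
        (C < Fintype.card F →
          ∃ u : Fin d → Polynomial F, (∀ i, (u i).Monic ∧ (u i).natDegree = m i) ∧
            Squarefree (MvPolynomial.eval u f)) := by
  refine ⟨2 * (N + N * N) * N, fun F _ _ d hd f m hf hN hc hm hmN => ?_⟩
  have hpos : 0 < Fintype.card F := Fintype.card_pos
  have hexp : 1 ≤ ∑ i, m i :=
    (one_le_two.trans (hm ⟨0, hd⟩)).trans
      (Finset.single_le_sum_of_canonicallyOrdered (Finset.mem_univ _))
  have hcount :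
      {u ∈ SquarefreeValues.monicTuples F m | ¬ Squarefree (MvPolynomial.eval u f)}.ncard *
        Fintype.card F ≤ 2 * (N + N * N) * N * Fintype.card F ^ ∑ i, m i := by
    rw [← SquarefreeValues.ncard_monicTuples]
    refine (SquarefreeValues.ncard_not_squarefree_mul_card_le hf hm hc hmN).trans ?_
    gcongr
  refine ⟨Nat.le_of_mul_le_mul_right (hcount.trans_eq ?_) hpos, fun hq => ?_⟩
  · rw [mul_assoc _ (_ ^ _) _, pow_sub_one_mul (Nat.one_le_iff_ne_zero.1 hexp)]
  · by_contra! hno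
    have hall : {u ∈ SquarefreeValues.monicTuples F m | ¬ Squarefree (MvPolynomial.eval u f)} =
        SquarefreeValues.monicTuples F m := Set.sep_eq_self_iff_mem_true.2 hno
    rw [hall, SquarefreeValues.ncard_monicTuples, mul_comm] at hcount
    exact (Nat.le_of_mul_le_mul_right hcount (pow_pos hpos _)).not_gt hq
end

section
/- Let F be a perfect field with algebraic closure F̄, and let f ∈ F[x₁,…,x_d]. Then f is square-free as an element of F[x₁,…,x_d] if and only if f is square-free as an element of F̄[x₁,…,x_d]. -/
/-!
A nonzero `f` is square-free iff the ideal `(f)` is radical, i.e. iff `F[x]/(f)` is reduced, and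
`K[x]/(f) ≃ F[x]/(f) ⊗ K`. So it suffices that tensoring with a separable algebraic extension
`K/F` keeps an `F`-algebra `A` reduced. Since `K` is free over `F`, the coordinates of a nilpotent
element of `A ⊗ K` can be tested in the residue fields of `A`, which reduces this to the case
where `A` is a field; there `A ⊗ K` is a union of algebras étale over a field. Conversely, a
square factor of `f` over `F` is one over `K`, and a non-unit polynomial stays a non-unit.
-/

open scoped TensorProduct

theorem baseChange_repr_rTensor {ι R A A' M : Type*} [CommSemiring R] [Semiring A] [Semiring A']
    [Algebra R A] [Algebra R A'] [AddCommMonoid M] [Module R M] (b : Module.Basis ι R M)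
    (φ : A →ₐ[R] A') (x : A ⊗[R] M) (i : ι) :
    (b.baseChange A').repr (φ.toLinearMap.rTensor M x) i = φ ((b.baseChange A).repr x i) := by
  induction x with
  | zero => simp
  | add x y hx hy => simp [hx, hy]
  | tmul a m => simp

theorem isReduced_tensorProduct_of_forall_residueField {R A B : Type*} [CommRing R] [CommRing A]
    [Ring B] [Algebra R A] [Algebra R B] [Module.Free R B] [IsReduced A]
    (h : ∀ (p : Ideal A) [p.IsPrime], IsReduced (p.ResidueField ⊗[R] B)) :
    IsReduced (A ⊗[R] B) := by
  let b := Module.Free.chooseBasis R B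
  refine ⟨fun x hx ↦ (b.baseChange A).ext_elem fun i ↦ ?_⟩
  have coord_mem (p : Ideal A) [p.IsPrime] : (b.baseChange A).repr x i ∈ p := by
    let φ : A →ₐ[R] p.ResidueField := IsScalarTower.toAlgHom R A p.ResidueField
    have map_eq_zero : φ.toLinearMap.rTensor B x = 0 :=
      (hx.map (Algebra.TensorProduct.map φ (.id R B))).eq_zero
    have map_coord_eq_zero : φ ((b.baseChange A).repr x i) = 0 := by
      rw [← baseChange_repr_rTensor, map_eq_zero, map_zero, Finsupp.zero_apply]
    exact p.algebraMap_residueField_eq_zero.mp map_coord_eq_zero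
  have coord_nilpotent : IsNilpotent ((b.baseChange A).repr x i) :=
    nilpotent_iff_mem_prime.mpr fun p _ ↦ coord_mem p
  rw [coord_nilpotent.eq_zero, map_zero, Finsupp.zero_apply]

theorem isReduced_tensorProduct_field_of_isSeparable (F L K : Type*) [Field F] [Field L] [Field K]
    [Algebra F L] [Algebra F K] [Algebra.IsSeparable F K] : IsReduced (L ⊗[F] K) := by
  refine IsReduced.tensorProduct_of_flat_of_forall_fg fun E hE ↦ ?_
  let _ : Field E := (Subalgebra.isField_of_algebraic E).toField
  have : Algebra.FiniteType F E := E.fg_iff_finiteType.mp hE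
  have : Algebra.IsSeparable F E := .of_algHom F K E.val
  have : Algebra.FormallyUnramified F E := .of_isSeparable F E
  exact Algebra.FormallyUnramified.isReduced_of_field L (L ⊗[F] E)

theorem isReduced_tensorProduct_of_isSeparable (F A K : Type*) [Field F] [CommRing A] [Field K]
    [Algebra F A] [Algebra F K] [Algebra.IsSeparable F K] [IsReduced A] : IsReduced (A ⊗[F] K) :=
  isReduced_tensorProduct_of_forall_residueField fun p _ ↦
    isReduced_tensorProduct_field_of_isSeparable F p.ResidueField K

theorem isRadical_map_algebraMap_of_isPushout_of_isSeparable (F K : Type*) {A B : Type*}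
    [Field F] [Field K] [CommRing A] [CommRing B] [Algebra F K] [Algebra F A] [Algebra F B]
    [Algebra K B] [Algebra A B] [IsScalarTower F K B] [IsScalarTower F A B]
    [Algebra.IsPushout F K A B] [Algebra.IsSeparable F K] {I : Ideal A} (hI : I.IsRadical) :
    (I.map (algebraMap A B)).IsRadical := by
  rw [Ideal.isRadical_iff_quotient_reduced] at hI ⊢
  have := isReduced_tensorProduct_of_isSeparable F (A ⧸ I) K
  let e : (B ⧸ I.map (algebraMap A B)) ≃+* (A ⧸ I) ⊗[F] K :=
    (Algebra.TensorProduct.quotIdealMapEquivTensorQuot B I).toRingEquiv.trans <|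
      (Algebra.IsPushout.cancelBaseChangeAlg F K A B (A ⧸ I)).toRingEquiv.trans
        (Algebra.TensorProduct.comm F K (A ⧸ I)).toRingEquiv
  exact isReduced_of_injective e e.injective

attribute [local instance] MvPolynomial.algebraMvPolynomial in
theorem squarefree_mvPolynomial_map_of_isSeparable {F K σ : Type*} [Field F] [Field K]
    [Algebra F K] [Algebra.IsSeparable F K] {f : MvPolynomial σ F} (hf : Squarefree f) :
    Squarefree (MvPolynomial.map (algebraMap F K) f) := by
  have map_ne_zero : MvPolynomial.map (algebraMap F K) f ≠ 0 :=
    (map_ne_zero_iff _ (MvPolynomial.map_injective _ (algebraMap F K).injective)).mpr hf.ne_zero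
  have span_isRadical : (Ideal.span {f}).IsRadical := isRadical_iff_span_singleton.mp hf.isRadical
  have map_span_isRadical : (Ideal.span {MvPolynomial.map (algebraMap F K) f}).IsRadical := by
    simpa [Ideal.map_span] using
      isRadical_map_algebraMap_of_isPushout_of_isSeparable F K (B := MvPolynomial σ K)
        span_isRadical
  exact (isRadical_iff_span_singleton.mpr map_span_isRadical).squarefree map_ne_zero

theorem isLocalHom_mvPolynomial_map {σ R S : Type*} [CommRing R] [CommRing S] {φ : R →+* S}
    (hφ : Function.Injective φ) [IsLocalHom φ] :
    IsLocalHom (MvPolynomial.map (σ := σ) φ) where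
  map_nonunit p hp := by
    rw [MvPolynomial.isUnit_iff] at hp ⊢
    simpa [MvPolynomial.coeff_map, IsNilpotent.map_iff hφ] using hp

theorem squarefree_of_squarefree_map {M N Φ : Type*} [Monoid M] [Monoid N] [FunLike Φ M N]
    [MonoidHomClass Φ M N] (φ : Φ) [IsLocalHom φ] {a : M} (ha : Squarefree (φ a)) :
    Squarefree a := fun b hb ↦
  isUnit_of_map_unit φ b <| ha (φ b) <| map_mul φ b b ▸ map_dvd φ hb

theorem squarefree_iff_squarefree_algClosure_of_perfect_general
    {F K σ : Type*} [Field F] [Field K] [Algebra F K] [Algebra.IsSeparable F K]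
    (f : MvPolynomial σ F) :
    Squarefree f ↔ Squarefree (MvPolynomial.map (algebraMap F K) f) :=
  have := isLocalHom_mvPolynomial_map (σ := σ) (algebraMap F K).injective
  ⟨squarefree_mvPolynomial_map_of_isSeparable, squarefree_of_squarefree_map _⟩

/-- Over a perfect field `F`, a multivariate polynomial `f ∈ F[x₁,…,x_d]` is
square-free iff it is square-free as an element of `F̄[x₁,…,x_d]`. -/
theorem squarefree_iff_squarefree_algClosure_of_perfect
    (F : Type*) [Field F] [PerfectField F] (d : ℕ) (f : MvPolynomial (Fin d) F) :
    Squarefree f ↔ Squarefree (MvPolynomial.map (algebraMap F (AlgebraicClosure F)) f) := by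
  exact squarefree_iff_squarefree_algClosure_of_perfect_general f
end
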